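/- Let 2 ≤ d ≤ n and let p_1, …, p_n ∈ ℝ^d generate the zonotope Z = Σ_{i=1}^n [0, p_i]. If Z contains a translate of the closed Euclidean unit ball (i.e., the inradius of Z is at least 1), then vol_d(Z) ≥ κ_d · (1 + π²/(12 n²)). -/

import Mathlib

open scoped Pointwise
open MeasureTheory

/-!
Adding a segment `[0, q]` to a convex body increases its volume by `‖q‖` times the volume of the
body's shadow on the hyperplane `qᗮ`. Expanding `Z + ε Z = (1 + ε) Z` generator by generator and
letting `ε → 0` gives `∑ ‖pᵢ‖ vol (Tᵢ Z) ≤ d vol Z`, where `Tᵢ` is the projection along `pᵢ`;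
expanding `B + ε Z ⊇ (1 + ε) B` for the unit ball `B` gives `d κ_d ≤ κ_{d-1} ∑ ‖pᵢ‖`. Each `Tᵢ Z` is
a zonotope with inradius at least `1` in dimension `d - 1`, so a lower bound for `vol Z / κ_d` valid
in one dimension passes to the next, and only the plane remains.

In the plane, membership in a zonotope centred at `0` only has to be tested by the support function
at the normals of the generators, and the inradius bounds that function below by the norm. Hence
the disc of radius `R = 1 / cos (π / 2n)` is covered by the centred `Z` and the `2n` circular
segments cut off by the tangent lines to the unit disc with these normals. Comparing areas, `Z` has
at least the area `2n tan (π / 2n)` of the regular `2n`-gon circumscribed to the unit disc, and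
`tan x ≥ x + x ^ 3 / 3` finishes the proof.
-/

open Metric Module
open scoped Real RealInnerProductSpace

section Zonotope

variable {ι E F : Type*}

/-- The zonotope generated by the vectors `p i`, `i ∈ s`. The finite index set is an explicit
argument so that generators can be added one at a time. -/
def zonotope [AddCommGroup E] [Module ℝ E] (s : Finset ι) (p : ι → E) : Set E :=
  ∑ i ∈ s, segment ℝ 0 (p i)

section Module

variable [AddCommGroup E] [Module ℝ E] [AddCommGroup F] [Module ℝ F] {s : Finset ι} {p : ι → E}

theorem zonotope_insert [DecidableEq ι] {a : ι} (ha : a ∉ s) (p : ι → E) :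
    zonotope (insert a s) p = zonotope s p + segment ℝ 0 (p a) := by
  rw [zonotope, Finset.sum_insert ha, add_comm, zonotope]

theorem mem_zonotope {x : E} :
    x ∈ zonotope s p ↔ ∃ t : ι → ℝ, (∀ i ∈ s, t i ∈ Set.Icc 0 1) ∧ ∑ i ∈ s, t i • p i = x := by
  simp only [zonotope, Set.mem_finsetSum, segment_eq_image', zero_add, sub_zero]
  constructor
  · rintro ⟨g, hg, rfl⟩
    choose! t ht htg using fun i (hi : i ∈ s) => hg hi
    exact ⟨t, ht, Finset.sum_congr rfl htg⟩
  · rintro ⟨t, ht, rfl⟩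
    exact ⟨fun i => t i • p i, fun {i} hi => ⟨t i, ht i hi, rfl⟩, rfl⟩

theorem convex_zonotope (s : Finset ι) (p : ι → E) : Convex ℝ (zonotope s p) :=
  convex_sum _ fun _ _ => convex_segment _ _

theorem zero_mem_zonotope (s : Finset ι) (p : ι → E) : 0 ∈ zonotope s p :=
  mem_zonotope.2 ⟨0, fun _ _ => ⟨le_rfl, zero_le_one⟩, by simp⟩

theorem image_zonotope (T : E →ₗ[ℝ] F) (s : Finset ι) (p : ι → E) :
    T '' zonotope s p = zonotope s (T ∘ p) := by
  rw [zonotope, Set.image_finsetSum]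
  refine Finset.sum_congr rfl fun i _ => ?_
  simpa using image_segment ℝ T.toAffineMap 0 (p i)

theorem smul_zonotope (r : ℝ) (s : Finset ι) (p : ι → E) :
    r • zonotope s p = zonotope s (r • p) :=
  image_zonotope (LinearMap.lsmul ℝ E r) s p

end Module

theorem isCompact_zonotope [AddCommGroup E] [Module ℝ E] [TopologicalSpace E]
    [IsTopologicalAddGroup E] [ContinuousSMul ℝ E] (s : Finset ι) (p : ι → E) :
    IsCompact (zonotope s p) := by
  refine Finset.sum_induction _ IsCompact (fun _ _ => IsCompact.add) isCompact_singleton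
    fun i _ => ?_
  rw [segment_eq_image']
  exact isCompact_Icc.image (by fun_prop)

theorem zonotope_subset_closedBall [SeminormedAddCommGroup E] [NormedSpace ℝ E] (s : Finset ι)
    (p : ι → E) : zonotope s p ⊆ closedBall 0 (∑ i ∈ s, ‖p i‖) := by
  intro x hx
  obtain ⟨t, ht, rfl⟩ := mem_zonotope.1 hx
  refine mem_closedBall_zero_iff.2 (norm_sum_le_of_le s fun i hi => ?_)
  rw [norm_smul, Real.norm_of_nonneg (ht i hi).1]
  exact mul_le_of_le_one_left (norm_nonneg _) (ht i hi).2

theorem closedBall_one_add_subset_add_zonotope [NormedAddCommGroup E] [NormedSpace ℝ E]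
    [ProperSpace E] {s : Finset ι} {p : ι → E} {c : E} (hc : closedBall c 1 ⊆ zonotope s p)
    {ε : ℝ} (hε : 0 ≤ ε) :
    closedBall (ε • c) (1 + ε) ⊆ closedBall 0 1 + zonotope s (ε • p) := by
  calc closedBall (ε • c) (1 + ε) = closedBall 0 1 + ε • closedBall c 1 := by
        rw [_root_.smul_closedBall _ _ zero_le_one, Real.norm_of_nonneg hε, mul_one,
          closedBall_add_closedBall zero_le_one hε, zero_add]
    _ ⊆ closedBall 0 1 + zonotope s (ε • p) := by
        rw [← smul_zonotope]
        exact Set.add_subset_add_left (Set.smul_set_mono hc)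

end Zonotope

section Width

variable {ι E : Type*} [NormedAddCommGroup E] [InnerProductSpace ℝ E] {s : Finset ι} {p : ι → E}

theorem inner_sub_le_sum_abs_inner {x y : E} (hx : x ∈ zonotope s p) (hy : y ∈ zonotope s p)
    (v : E) : ⟪v, x - y⟫ ≤ ∑ i ∈ s, |⟪v, p i⟫| := by
  obtain ⟨t, ht, rfl⟩ := mem_zonotope.1 hx
  obtain ⟨t', ht', rfl⟩ := mem_zonotope.1 hy
  rw [← Finset.sum_sub_distrib, inner_sum]
  refine Finset.sum_le_sum fun i hi => ?_
  rw [← sub_smul, inner_smul_right]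
  refine (le_abs_self _).trans ?_
  rw [abs_mul]
  refine mul_le_of_le_one_left (abs_nonneg _) (abs_le.2 ⟨?_, ?_⟩) <;>
    linarith [(ht i hi).1, (ht i hi).2, (ht' i hi).1, (ht' i hi).2]

theorem exists_mem_zonotope_two_mul_inner_eq (s : Finset ι) (p : ι → E) (v : E) :
    ∃ x ∈ zonotope s p, 2 * ⟪v, x⟫ = ⟪v, ∑ i ∈ s, p i⟫ + ∑ i ∈ s, |⟪v, p i⟫| := by
  refine ⟨∑ i ∈ s, (if 0 ≤ ⟪v, p i⟫ then (1 : ℝ) else 0) • p i,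
    mem_zonotope.2 ⟨_, fun i _ => ?_, rfl⟩, ?_⟩
  · split_ifs <;> simp
  · simp only [inner_sum, inner_smul_right, Finset.mul_sum, ← Finset.sum_add_distrib]
    refine Finset.sum_congr rfl fun i _ => ?_
    split_ifs with h
    · rw [abs_of_nonneg h]
      ring
    · rw [abs_of_neg (not_le.1 h)]
      ring

theorem half_sum_add_mem_zonotope_of_two_mul_inner_le [CompleteSpace E] {y : E}
    (hy : ∀ v : E, 2 * ⟪v, y⟫ ≤ ∑ i ∈ s, |⟪v, p i⟫|) :
    (1 / 2 : ℝ) • ∑ i ∈ s, p i + y ∈ zonotope s p := by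
  by_contra hmem
  obtain ⟨f, r, hf, hr⟩ := geometric_hahn_banach_closed_point
    (convex_zonotope s p) (isCompact_zonotope s p).isClosed hmem
  set v := (InnerProductSpace.toDual ℝ E).symm f with hv
  have hfv (x : E) : f x = ⟪v, x⟫ := by simp [hv]
  obtain ⟨x, hx, hvx⟩ := exists_mem_zonotope_two_mul_inner_eq s p v
  have hlt := (hf x hx).trans hr
  rw [hfv, hfv, inner_add_right, inner_smul_right] at hlt
  linarith [hy v]

theorem two_mul_norm_le_sum_abs_inner {c : E} (hc : closedBall c 1 ⊆ zonotope s p) (v : E) :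
    2 * ‖v‖ ≤ ∑ i ∈ s, |⟪v, p i⟫| := by
  set u := ‖v‖⁻¹ • v with hu_def
  have hu : ‖u‖ ≤ 1 := by
    rw [hu_def, norm_smul, norm_inv, norm_norm]
    exact inv_mul_le_one
  have hvu : ⟪v, c + u - (c - u)⟫ = 2 * ‖v‖ := by
    rw [add_sub_sub_cancel, ← two_smul ℝ u, inner_smul_right, hu_def, inner_smul_right,
      real_inner_self_eq_norm_mul_norm, ← mul_assoc ‖v‖⁻¹, mul_comm ‖v‖⁻¹, mul_inv_mul_cancel]
  rw [← hvu]
  exact inner_sub_le_sum_abs_inner (hc (by simpa using hu)) (hc (by simpa using hu)) v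

theorem eq_zero_of_closedBall_subset_zonotope {c : E} (hc : closedBall c 1 ⊆ zonotope s p) {v : E}
    (hv : ∀ i ∈ s, ⟪v, p i⟫ = 0) : v = 0 := by
  have h := two_mul_norm_le_sum_abs_inner hc v
  rw [Finset.sum_eq_zero fun i hi => by rw [hv i hi, abs_zero]] at h
  exact norm_le_zero_iff.1 (by linarith)

theorem finrank_le_card_of_closedBall_subset_zonotope [FiniteDimensional ℝ E] {c : E}
    (hc : closedBall c 1 ⊆ zonotope s p) : finrank ℝ E ≤ s.card := by
  classical
  have hspan : Submodule.span ℝ (s.image p : Set E) = ⊤ := by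
    rw [← Submodule.orthogonal_eq_bot_iff, Submodule.eq_bot_iff]
    refine fun v hv => eq_zero_of_closedBall_subset_zonotope hc fun i hi => ?_
    exact Submodule.inner_left_of_mem_orthogonal
      (Submodule.subset_span (Finset.mem_coe.2 (Finset.mem_image_of_mem p hi))) hv
  calc finrank ℝ E = finrank ℝ (Submodule.span ℝ (s.image p : Set E)) := by rw [hspan, finrank_top]
    _ ≤ (s.image p).card := finrank_span_finset_le_card _
    _ ≤ s.card := Finset.card_image_le

end Width

section Projection

theorem volume_add_Icc {s : Set ℝ} (hc : IsCompact s) (hv : Convex ℝ s) (hne : s.Nonempty)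
    {l : ℝ} (hl : 0 ≤ l) : volume (s + Set.Icc 0 l) = volume s + ENNReal.ofReal l := by
  obtain ⟨a, b, rfl⟩ : ∃ a b, s = Set.Icc a b :=
    ⟨_, _, eq_Icc_of_connected_compact ⟨hne, hv.isPreconnected⟩ hc⟩
  have hab : a ≤ b := Set.nonempty_Icc.1 hne
  rw [Set.Icc_add_Icc hab hl, Real.volume_Icc, Real.volume_Icc,
    ← ENNReal.ofReal_add (sub_nonneg.2 hab) hl]
  ring_nf

theorem preimage_prodMk_left_add_prod_zero {M F : Type*} [Add M] [AddZeroClass F] (K : Set (M × F))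
    (I : Set M) (y : F) : (·, y) ⁻¹' (K + I ×ˢ {(0 : F)}) = (·, y) ⁻¹' K + I := by
  ext x
  simp [Set.mem_add]

theorem volume_prod_add_Icc_prod_zero {F : Type*} [NormedAddCommGroup F] [NormedSpace ℝ F]
    [MeasurableSpace F] [BorelSpace F] [SecondCountableTopology F] (μ : Measure F) [SFinite μ]
    {K : Set (ℝ × F)} (hK : IsCompact K) (hKc : Convex ℝ K) {l : ℝ} (hl : 0 ≤ l) :
    (volume.prod μ) (K + Set.Icc 0 l ×ˢ {0}) =
      (volume.prod μ) K + ENNReal.ofReal l * μ (Prod.snd '' K) := by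
  have hK' : MeasurableSet (K + Set.Icc (0 : ℝ) l ×ˢ {(0 : F)}) :=
    (hK.add (isCompact_Icc.prod isCompact_singleton)).measurableSet
  have hsnd : MeasurableSet (Prod.snd '' K) := (hK.image continuous_snd).measurableSet
  rw [Measure.prod_apply_symm hK', Measure.prod_apply_symm hK.measurableSet,
    ← lintegral_indicator_const hsnd, ← lintegral_add_right _ (measurable_const.indicator hsnd)]
  refine lintegral_congr fun y => ?_
  rw [preimage_prodMk_left_add_prod_zero]
  rcases Set.eq_empty_or_nonempty ((·, y) ⁻¹' K) with hempty | ⟨x, hx⟩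
  · have hy : y ∉ Prod.snd '' K := by
      rintro ⟨⟨x, y⟩, hx, rfl⟩
      exact Set.notMem_empty x (hempty ▸ hx)
    simp [hempty, hy]
  · have hy : y ∈ Prod.snd '' K := ⟨(x, y), hx, rfl⟩
    rw [Set.indicator_of_mem hy]
    refine volume_add_Icc ?_ ?_ ⟨x, hx⟩ hl
    · exact (hK.image continuous_fst).of_isClosed_subset (hK.isClosed.preimage (by fun_prop))
        fun x hx => ⟨(x, y), hx, rfl⟩
    · exact hKc.affine_preimage ((AffineMap.id ℝ ℝ).prod (AffineMap.const ℝ ℝ y))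

variable {E F : Type*} [NormedAddCommGroup E] [InnerProductSpace ℝ E]
  [NormedAddCommGroup F] [InnerProductSpace ℝ F]

/-- `T : E → F` is, up to an isometry, the orthogonal projection of `E` onto the hyperplane
orthogonal to `q`. Landing in a fixed space `F` rather than in `(ℝ ∙ q)ᗮ` keeps the volume on the
target the one of the inner product space `F`, and makes sense of the case `q = 0`. -/
def IsProjectionAlong (q : E) (T : E →L[ℝ] F) : Prop :=
  ∃ Φ : E ≃ₗᵢ[ℝ] WithLp 2 (ℝ × F), Φ q = WithLp.toLp 2 (‖q‖, 0) ∧ ∀ x, T x = (Φ x).snd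

theorem exists_linearIsometryEquiv_apply_eq [FiniteDimensional ℝ E] [FiniteDimensional ℝ F]
    (h : finrank ℝ E = finrank ℝ F) {x : E} {y : F} (hxy : ‖x‖ = ‖y‖) :
    ∃ Φ : E ≃ₗᵢ[ℝ] F, Φ x = y := by
  let Ψ : E ≃ₗᵢ[ℝ] F :=
    (stdOrthonormalBasis ℝ E).equiv (stdOrthonormalBasis ℝ F) (finCongr h)
  exact ⟨Ψ.trans (ℝ ∙ (Ψ x - y))ᗮ.reflection, Submodule.reflection_sub (by simpa using hxy)⟩

theorem exists_linearIsometryEquiv_prod_apply_eq [FiniteDimensional ℝ E] [FiniteDimensional ℝ F]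
    (h : finrank ℝ E = finrank ℝ F + 1) (q : E) :
    ∃ Φ : E ≃ₗᵢ[ℝ] WithLp 2 (ℝ × F), Φ q = WithLp.toLp 2 (‖q‖, 0) := by
  refine exists_linearIsometryEquiv_apply_eq ?_ (by simp)
  rw [(WithLp.linearEquiv 2 ℝ (ℝ × F)).finrank_eq, finrank_prod, finrank_self, h, add_comm]

theorem exists_isProjectionAlong [FiniteDimensional ℝ E] [FiniteDimensional ℝ F]
    (h : finrank ℝ E = finrank ℝ F + 1) (q : E) : ∃ T : E →L[ℝ] F, IsProjectionAlong q T := by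
  obtain ⟨Φ, hΦ⟩ := exists_linearIsometryEquiv_prod_apply_eq (F := F) h q
  exact ⟨WithLp.sndL 2 ℝ ℝ F ∘L (Φ : E →L[ℝ] WithLp 2 (ℝ × F)), Φ, hΦ, fun _ => rfl⟩

namespace IsProjectionAlong

variable {q : E} {T : E →L[ℝ] F}

theorem smul (h : IsProjectionAlong q T) {r : ℝ} (hr : 0 ≤ r) : IsProjectionAlong (r • q) T := by
  obtain ⟨Φ, hq, hT⟩ := h
  refine ⟨Φ, ?_, hT⟩
  rw [map_smul, hq, ← WithLp.toLp_smul, norm_smul, Real.norm_of_nonneg hr]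
  simp

theorem norm_apply_le (h : IsProjectionAlong q T) (x : E) : ‖T x‖ ≤ ‖x‖ := by
  obtain ⟨Φ, -, hT⟩ := h
  rw [hT, ← Φ.norm_map x]
  exact WithLp.norm_snd_le _ _

theorem image_closedBall (h : IsProjectionAlong q T) (c : E) (r : ℝ) :
    T '' closedBall c r = closedBall (T c) r := by
  refine Set.Subset.antisymm ?_ fun y hy => ?_
  · rintro _ ⟨x, hx, rfl⟩
    rw [mem_closedBall_iff_norm, ← map_sub]
    exact (h.norm_apply_le _).trans (mem_closedBall_iff_norm.1 hx)
  · obtain ⟨Φ, -, hT⟩ := h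
    set z : E := Φ.symm (WithLp.toLp 2 (0, y - T c))
    have hTz : T z = y - T c := by simp [hT, z]
    have hz : ‖z‖ = ‖y - T c‖ := by simp [z]
    refine ⟨c + z, ?_, by rw [map_add, hTz, add_sub_cancel]⟩
    rw [mem_closedBall_iff_norm, add_sub_cancel_left, hz]
    exact mem_closedBall_iff_norm.1 hy

end IsProjectionAlong

/-- The isomorphism `E ≃ ℝ × F` underlying an isometric splitting `Φ` of `E`. It preserves volume
but not the norm, since `ℝ × F` carries the sup norm. -/
noncomputable def splitEquiv (Φ : E ≃ₗᵢ[ℝ] WithLp 2 (ℝ × F)) : E ≃L[ℝ] ℝ × F :=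
  Φ.toContinuousLinearEquiv.trans (WithLp.prodContinuousLinearEquiv 2 ℝ ℝ F)

theorem splitEquiv_apply (Φ : E ≃ₗᵢ[ℝ] WithLp 2 (ℝ × F)) (x : E) :
    splitEquiv Φ x = ((Φ x).fst, (Φ x).snd) :=
  rfl

theorem image_splitEquiv_segment {Φ : E ≃ₗᵢ[ℝ] WithLp 2 (ℝ × F)} {q : E}
    (hq : Φ q = WithLp.toLp 2 (‖q‖, 0)) :
    splitEquiv Φ '' segment ℝ 0 q = Set.Icc 0 ‖q‖ ×ˢ {0} := by
  have hq' : splitEquiv Φ q = (‖q‖, 0) := by simp [splitEquiv_apply, hq]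
  calc splitEquiv Φ '' segment ℝ 0 q = segment ℝ (0, 0) (‖q‖, 0) := by
        simpa [hq', ← Prod.mk_zero_zero] using
          image_segment ℝ (splitEquiv Φ).toLinearMap.toAffineMap 0 q
    _ = Set.Icc 0 ‖q‖ ×ˢ {0} := by
        rw [← Prod.image_mk_segment_left, segment_eq_Icc (norm_nonneg q), Set.prod_singleton]

variable [FiniteDimensional ℝ E] [MeasurableSpace E] [BorelSpace E]
  [FiniteDimensional ℝ F] [MeasurableSpace F] [BorelSpace F]

theorem measurePreserving_splitEquiv (Φ : E ≃ₗᵢ[ℝ] WithLp 2 (ℝ × F)) :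
    MeasurePreserving (splitEquiv Φ) :=
  (WithLp.volume_preserving_ofLp ℝ F).comp Φ.measurePreserving

theorem volume_image_splitEquiv (Φ : E ≃ₗᵢ[ℝ] WithLp 2 (ℝ × F)) (K : Set E) :
    volume (splitEquiv Φ '' K) = volume K := by
  rw [← (measurePreserving_splitEquiv Φ).measure_preimage_emb
    (splitEquiv Φ).toHomeomorph.measurableEmbedding, (splitEquiv Φ).injective.preimage_image]

theorem IsProjectionAlong.measureReal_add_segment {q : E} {T : E →L[ℝ] F}
    (h : IsProjectionAlong q T) {K : Set E} (hK : IsCompact K) (hKc : Convex ℝ K) :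
    volume.real (K + segment ℝ 0 q) = volume.real K + ‖q‖ * volume.real (T '' K) := by
  obtain ⟨Φ, hq, hT⟩ := h
  have hTK : Prod.snd '' (splitEquiv Φ '' K) = T '' K := by
    simp only [Set.image_image, splitEquiv_apply, hT]
  have hvol : volume (K + segment ℝ 0 q) = volume K + ENNReal.ofReal ‖q‖ * volume (T '' K) := by
    rw [← volume_image_splitEquiv Φ, Set.image_add, image_splitEquiv_segment hq,
      Measure.volume_eq_prod, volume_prod_add_Icc_prod_zero volume
        (hK.image (splitEquiv Φ).continuous) (hKc.linear_image (splitEquiv Φ).toLinearMap)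
        (norm_nonneg q), hTK, ← Measure.volume_eq_prod, volume_image_splitEquiv]
  rw [measureReal_def, hvol, ENNReal.toReal_add hK.measure_ne_top
    (ENNReal.mul_ne_top ENNReal.ofReal_ne_top (hK.image T.continuous).measure_ne_top),
    ENNReal.toReal_mul, ENNReal.toReal_ofReal (norm_nonneg q), measureReal_def, measureReal_def]

end Projection

section SurfaceArea

variable {ι E F : Type*} [NormedAddCommGroup E] [InnerProductSpace ℝ E] [FiniteDimensional ℝ E]
  [MeasurableSpace E] [BorelSpace E] [NormedAddCommGroup F] [InnerProductSpace ℝ F]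
  [FiniteDimensional ℝ F] [MeasurableSpace F] [BorelSpace F]
  {s : Finset ι} {p : ι → E} {T : ι → E →L[ℝ] F} {K : Set E}

theorem measureReal_add_zonotope_le (hT : ∀ i ∈ s, IsProjectionAlong (p i) (T i))
    (hK : IsCompact K) (hKc : Convex ℝ K) :
    volume.real (K + zonotope s p) ≤
      volume.real K + ∑ i ∈ s, ‖p i‖ * volume.real (T i '' (K + zonotope s p)) := by
  classical
  induction s using Finset.induction_on with
  | empty => simp [zonotope]
  | insert a s ha ih =>
    have hcompact : IsCompact (K + zonotope s p) := hK.add (isCompact_zonotope s p)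
    have hsub : K + zonotope s p ⊆ K + zonotope (insert a s) p := by
      rw [zonotope_insert ha]
      exact Set.add_subset_add_left (Set.subset_add_left _ (left_mem_segment ℝ _ _))
    have hmono (i : ι) : ‖p i‖ * volume.real (T i '' (K + zonotope s p)) ≤
        ‖p i‖ * volume.real (T i '' (K + zonotope (insert a s) p)) := by
      gcongr
      exact ((hK.add (isCompact_zonotope _ p)).image (T i).continuous).measure_ne_top
    calc volume.real (K + zonotope (insert a s) p)
        = volume.real (K + zonotope s p) + ‖p a‖ * volume.real (T a '' (K + zonotope s p)) := by
          rw [zonotope_insert ha, ← add_assoc,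
            (hT a (Finset.mem_insert_self a s)).measureReal_add_segment hcompact
              (hKc.add (convex_zonotope s p))]
      _ ≤ volume.real K + ∑ i ∈ s, ‖p i‖ * volume.real (T i '' (K + zonotope s p)) +
            ‖p a‖ * volume.real (T a '' (K + zonotope s p)) := by
          gcongr
          exact ih fun i hi => hT i (Finset.mem_insert_of_mem hi)
      _ = volume.real K +
            ∑ i ∈ insert a s, ‖p i‖ * volume.real (T i '' (K + zonotope s p)) := by
          rw [Finset.sum_insert ha]
          ring
      _ ≤ volume.real K +
            ∑ i ∈ insert a s, ‖p i‖ * volume.real (T i '' (K + zonotope (insert a s) p)) :=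
          add_le_add_right (Finset.sum_le_sum fun i _ => hmono i) _

theorem le_measureReal_add_zonotope (hT : ∀ i ∈ s, IsProjectionAlong (p i) (T i))
    (hK : IsCompact K) (hKc : Convex ℝ K) :
    volume.real K + ∑ i ∈ s, ‖p i‖ * volume.real (T i '' K) ≤
      volume.real (K + zonotope s p) := by
  classical
  induction s using Finset.induction_on with
  | empty => simp [zonotope]
  | insert a s ha ih =>
    have hcompact : IsCompact (K + zonotope s p) := hK.add (isCompact_zonotope s p)
    calc volume.real K + ∑ i ∈ insert a s, ‖p i‖ * volume.real (T i '' K)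
        = volume.real K + ∑ i ∈ s, ‖p i‖ * volume.real (T i '' K) +
            ‖p a‖ * volume.real (T a '' K) := by
          rw [Finset.sum_insert ha]
          ring
      _ ≤ volume.real (K + zonotope s p) + ‖p a‖ * volume.real (T a '' (K + zonotope s p)) := by
          gcongr
          · exact ih fun i hi => hT i (Finset.mem_insert_of_mem hi)
          · exact (hcompact.image (T a).continuous).measure_ne_top
          · exact Set.subset_add_left _ (zero_mem_zonotope s p)
      _ = volume.real (K + zonotope (insert a s) p) := by
          rw [zonotope_insert ha, ← add_assoc,
            (hT a (Finset.mem_insert_self a s)).measureReal_add_segment hcompact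
              (hKc.add (convex_zonotope s p))]

theorem le_natCast_mul_of_forall_add_mul_le_one_add_pow_mul {a b : ℝ} {n : ℕ}
    (h : ∀ ε : ℝ, 0 < ε → a + ε * b ≤ (1 + ε) ^ n * a) : b ≤ n * a := by
  have hgeom (ε : ℝ) (hε : 0 < ε) : b ≤ (∑ k ∈ Finset.range n, (1 + ε) ^ k) * a := by
    refine le_of_mul_le_mul_left ?_ hε
    have hsum : ε * ∑ k ∈ Finset.range n, (1 + ε) ^ k = (1 + ε) ^ n - 1 := by
      simpa using mul_geom_sum (1 + ε) n
    rw [← mul_assoc, hsum]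
    linarith [h ε hε]
  have hcont : Continuous fun ε : ℝ => (∑ k ∈ Finset.range n, (1 + ε) ^ k) * a := by fun_prop
  have hlim := (hcont.tendsto 0).mono_left (nhdsWithin_le_nhds (s := Set.Ioi 0))
  simp only [add_zero, one_pow, Finset.sum_const, Finset.card_range, nsmul_eq_mul, mul_one] at hlim
  exact ge_of_tendsto hlim (eventually_mem_nhdsWithin.mono hgeom)

theorem sum_norm_mul_measureReal_image_le (hT : ∀ i ∈ s, IsProjectionAlong (p i) (T i)) :
    ∑ i ∈ s, ‖p i‖ * volume.real (T i '' zonotope s p) ≤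
      finrank ℝ E * volume.real (zonotope s p) := by
  refine le_natCast_mul_of_forall_add_mul_le_one_add_pow_mul fun ε hε => ?_
  have hsum : zonotope s p + zonotope s (ε • p) = (1 + ε) • zonotope s p := by
    rw [(convex_zonotope s p).add_smul zero_le_one hε.le, one_smul, smul_zonotope]
  calc volume.real (zonotope s p) + ε * ∑ i ∈ s, ‖p i‖ * volume.real (T i '' zonotope s p)
      = volume.real (zonotope s p) +
          ∑ i ∈ s, ‖(ε • p) i‖ * volume.real (T i '' zonotope s p) := by
        simp only [Pi.smul_apply, norm_smul, Real.norm_of_nonneg hε.le, mul_assoc, Finset.mul_sum]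
    _ ≤ volume.real ((1 + ε) • zonotope s p) := by
        rw [← hsum]
        exact le_measureReal_add_zonotope (fun i hi => (hT i hi).smul hε.le)
          (isCompact_zonotope s p) (convex_zonotope s p)
    _ = (1 + ε) ^ finrank ℝ E * volume.real (zonotope s p) := by
        rw [measureReal_def, Measure.addHaar_smul_of_nonneg _ (by positivity), ENNReal.toReal_mul,
          ENNReal.toReal_ofReal (by positivity), measureReal_def]

theorem measureReal_closedBall_add_zonotope_le (hEF : finrank ℝ E = finrank ℝ F + 1)
    (s : Finset ι) (p : ι → E) :
    volume.real (closedBall (0 : E) 1 + zonotope s p) ≤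
      volume.real (closedBall (0 : E) 1) + (∑ i ∈ s, ‖p i‖) *
        ((1 + ∑ i ∈ s, ‖p i‖) ^ finrank ℝ F * volume.real (closedBall (0 : F) 1)) := by
  set P := ∑ i ∈ s, ‖p i‖
  have hP : 0 ≤ P := Finset.sum_nonneg fun i _ => norm_nonneg _
  choose T hT using fun i => exists_isProjectionAlong (F := F) hEF (p i)
  have hsub : closedBall (0 : E) 1 + zonotope s p ⊆ closedBall 0 (1 + P) := by
    refine (Set.add_subset_add_left (zonotope_subset_closedBall s p)).trans_eq ?_
    rw [closedBall_add_closedBall zero_le_one hP, add_zero]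
  have hshadow (i : ι) : volume.real (T i '' (closedBall (0 : E) 1 + zonotope s p)) ≤
      (1 + P) ^ finrank ℝ F * volume.real (closedBall (0 : F) 1) := by
    rw [← Measure.addHaar_real_closedBall' volume (T i 0) (by positivity),
      ← (hT i).image_closedBall]
    refine measureReal_mono (Set.image_mono hsub) ?_
    exact ((isCompact_closedBall _ _).image (T i).continuous).measure_ne_top
  refine (measureReal_add_zonotope_le (fun i _ => hT i) (isCompact_closedBall _ _)
    (convex_closedBall _ _)).trans ?_
  rw [Finset.sum_mul]
  gcongr with i
  exact hshadow i

theorem finrank_mul_measureReal_closedBall_le (hEF : finrank ℝ E = finrank ℝ F + 1) {c : E}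
    (hc : closedBall c 1 ⊆ zonotope s p) :
    finrank ℝ E * volume.real (closedBall (0 : E) 1) ≤
      (∑ i ∈ s, ‖p i‖) * volume.real (closedBall (0 : F) 1) := by
  set κ := volume.real (closedBall (0 : E) 1)
  set P := ∑ i ∈ s, ‖p i‖
  have hle (ε : ℝ) (hε : 0 < ε) :
      finrank ℝ E * κ ≤ P * ((1 + ε * P) ^ finrank ℝ F * volume.real (closedBall (0 : F) 1)) := by
    have hP : ∑ i ∈ s, ‖(ε • p) i‖ = ε * P := by
      simp only [Pi.smul_apply, norm_smul, Real.norm_of_nonneg hε.le, ← Finset.mul_sum, P]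
    have hgrow : (1 + ε) ^ finrank ℝ E * κ ≤ κ + ε * P *
        ((1 + ε * P) ^ finrank ℝ F * volume.real (closedBall (0 : F) 1)) := by
      rw [← Measure.addHaar_real_closedBall' volume (ε • c) (by positivity), ← hP]
      refine (measureReal_mono (closedBall_one_add_subset_add_zonotope hc hε.le)
        ?_).trans (measureReal_closedBall_add_zonotope_le hEF s (ε • p))
      exact ((isCompact_closedBall _ _).add (isCompact_zonotope _ _)).measure_ne_top
    have hbernoulli : (1 + finrank ℝ E * ε) * κ ≤ (1 + ε) ^ finrank ℝ E * κ := by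
      gcongr
      exact one_add_mul_le_pow (by linarith) _
    refine le_of_mul_le_mul_left ?_ hε
    linarith
  have hcont : Continuous fun ε : ℝ =>
      P * ((1 + ε * P) ^ finrank ℝ F * volume.real (closedBall (0 : F) 1)) := by fun_prop
  have hlim := (hcont.tendsto 0).mono_left (nhdsWithin_le_nhds (s := Set.Ioi 0))
  simp only [zero_mul, add_zero, one_pow, one_mul] at hlim
  exact ge_of_tendsto hlim (eventually_mem_nhdsWithin.mono hle)

theorem measureReal_closedBall_mul_le_of_finrank_eq_add_one (hEF : finrank ℝ E = finrank ℝ F + 1)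
    {A : ℝ} (hA : ∀ (q : ι → F) (b : F), closedBall b 1 ⊆ zonotope s q →
      volume.real (closedBall (0 : F) 1) * A ≤ volume.real (zonotope s q))
    {c : E} (hc : closedBall c 1 ⊆ zonotope s p) :
    volume.real (closedBall (0 : E) 1) * A ≤ volume.real (zonotope s p) := by
  rcases lt_or_ge A 0 with hA₀ | hA₀
  · exact (mul_nonpos_of_nonneg_of_nonpos measureReal_nonneg hA₀.le).trans measureReal_nonneg
  choose T hT using fun i => exists_isProjectionAlong (F := F) hEF (p i)
  have hshadow (i : ι) :
      volume.real (closedBall (0 : F) 1) * A ≤ volume.real (T i '' zonotope s p) := by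
    have himage : T i '' zonotope s p = zonotope s (T i ∘ p) := image_zonotope (T i).toLinearMap s p
    rw [himage]
    refine hA _ (T i c) ?_
    rw [← himage, ← (hT i).image_closedBall]
    exact Set.image_mono hc
  have hfinrank : (0 : ℝ) < finrank ℝ E := by
    rw [hEF]
    positivity
  refine le_of_mul_le_mul_left ?_ hfinrank
  calc finrank ℝ E * (volume.real (closedBall (0 : E) 1) * A)
      ≤ (∑ i ∈ s, ‖p i‖) * volume.real (closedBall (0 : F) 1) * A := by
        rw [← mul_assoc]
        exact mul_le_mul_of_nonneg_right (finrank_mul_measureReal_closedBall_le hEF hc) hA₀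
    _ = ∑ i ∈ s, ‖p i‖ * (volume.real (closedBall (0 : F) 1) * A) := by
        rw [mul_assoc, Finset.sum_mul]
    _ ≤ ∑ i ∈ s, ‖p i‖ * volume.real (T i '' zonotope s p) := by
        gcongr with i
        exact hshadow i
    _ ≤ finrank ℝ E * volume.real (zonotope s p) :=
        sum_norm_mul_measureReal_image_le fun i _ => hT i

end SurfaceArea

section Support

variable {ι E : Type*} {s : Finset ι}

theorem exists_sum_abs_add_sum_abs_eq {f g : ι → ℝ} (hfg : ∀ k ∈ s, f k = 0 → g k = 0)
    (hf : ∃ k ∈ s, f k ≠ 0) :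
    ∃ i ∈ s, ∃ j ∈ s, f i ≠ 0 ∧ f j ≠ 0 ∧
      ∑ k ∈ s, |g i / f i * f k - g k| + ∑ k ∈ s, |g k - g j / f j * f k| =
        (g i / f i - g j / f j) * ∑ k ∈ s, |f k| := by
  classical
  let q (k : ι) : ℝ := g k / f k
  have hq {k : ι} (hk : k ∈ s) : g k = q k * f k := by
    rcases eq_or_ne (f k) 0 with h | h
    · rw [h, mul_zero, hfg k hk h]
    · exact (div_mul_cancel₀ _ h).symm
  have hne : (s.filter (f · ≠ 0)).Nonempty := by simpa [Finset.Nonempty] using hf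
  obtain ⟨i, hi, hmax⟩ := Finset.exists_max_image _ q hne
  obtain ⟨j, hj, hmin⟩ := Finset.exists_min_image _ q hne
  rw [Finset.mem_filter] at hi hj
  refine ⟨i, hi.1, j, hj.1, hi.2, hj.2, ?_⟩
  change ∑ k ∈ s, |q i * f k - g k| + ∑ k ∈ s, |g k - q j * f k| = (q i - q j) * ∑ k ∈ s, |f k|
  -- As `q j ≤ q k ≤ q i`, the two terms at `k` are `(q i - q k) * |f k|` and `(q k - q j) * |f k|`.
  rw [← Finset.sum_add_distrib, Finset.mul_sum]
  refine Finset.sum_congr rfl fun k hk => ?_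
  rcases eq_or_ne (f k) 0 with h | h
  · simp [h, hfg k hk h]
  · have hk' : k ∈ s.filter (f · ≠ 0) := Finset.mem_filter.2 ⟨hk, h⟩
    rw [hq hk, ← sub_mul, ← sub_mul, abs_mul, abs_mul, abs_of_nonneg (sub_nonneg.2 (hmax k hk')),
      abs_of_nonneg (sub_nonneg.2 (hmin k hk'))]
    ring

variable [NormedAddCommGroup E] [InnerProductSpace ℝ E] {p : ι → E}

theorem exists_forall_smul_ne_of_one_lt_finrank (hE : 1 < finrank ℝ E) {u : E} (hu : u ≠ 0) :
    ∃ w : E, ∀ t : ℝ, t • u ≠ w := by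
  obtain ⟨w, hw⟩ := exists_linearIndependent_pair_of_one_lt_finrank hE hu
  exact ⟨w, (LinearIndependent.pair_iff' hu).1 hw⟩

theorem exists_normal_add_normal_eq_smul (hE : 1 < finrank ℝ E)
    (hp : ∀ v : E, (∀ i ∈ s, ⟪v, p i⟫ = 0) → v = 0) {u : E} (hu : u ≠ 0)
    (hup : ∀ k ∈ s, p k ≠ 0 → ⟪u, p k⟫ ≠ 0) :
    ∃ i ∈ s, ∃ j ∈ s, p i ≠ 0 ∧ p j ≠ 0 ∧ ∃ v w : E, ∃ r : ℝ, ⟪v, p i⟫ = 0 ∧ ⟪w, p j⟫ = 0 ∧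
      0 < r ∧ v + w = r • u ∧
        ∑ k ∈ s, |⟪v, p k⟫| + ∑ k ∈ s, |⟪w, p k⟫| = r * ∑ k ∈ s, |⟪u, p k⟫| := by
  obtain ⟨z, hz⟩ := exists_forall_smul_ne_of_one_lt_finrank hE hu
  have hzp (k : ι) (hk : k ∈ s) (huk : ⟪u, p k⟫ = 0) : ⟪z, p k⟫ = 0 := by
    rw [not_imp_not.1 (hup k hk) huk, inner_zero_right]
  have hne : ∃ k ∈ s, ⟪u, p k⟫ ≠ 0 := by
    by_contra! h
    exact hu (hp u h)
  obtain ⟨i, hi, j, hj, hui, huj, hsum⟩ := exists_sum_abs_add_sum_abs_eq hzp hne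
  set α := ⟪z, p i⟫ / ⟪u, p i⟫ with hα
  set β := ⟪z, p j⟫ / ⟪u, p j⟫ with hβ
  have hv (x : E) : ⟪α • u - z, x⟫ = α * ⟪u, x⟫ - ⟪z, x⟫ := by
    rw [inner_sub_left, real_inner_smul_left]
  have hw (x : E) : ⟪z - β • u, x⟫ = ⟪z, x⟫ - β * ⟪u, x⟫ := by
    rw [inner_sub_left, real_inner_smul_left]
  refine ⟨i, hi, j, hj, fun h => hui (by rw [h, inner_zero_right]),
    fun h => huj (by rw [h, inner_zero_right]), α • u - z, z - β • u, α - β,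
    by rw [hv, hα, div_mul_cancel₀ _ hui, sub_self],
    by rw [hw, hβ, div_mul_cancel₀ _ huj, sub_self], ?_,
    by rw [sub_add_sub_cancel, sub_smul], by simpa only [hv, hw] using hsum⟩
  by_contra! hle
  have hzero : ∑ k ∈ s, |α * ⟪u, p k⟫ - ⟪z, p k⟫| ≤ 0 := by
    refine (le_add_of_nonneg_right (Finset.sum_nonneg fun _ _ => abs_nonneg _)).trans
      (hsum.trans_le (mul_nonpos_of_nonpos_of_nonneg hle ?_))
    exact Finset.sum_nonneg fun _ _ => abs_nonneg _
  refine hz α (sub_eq_zero.1 (hp _ fun k hk => ?_))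
  rw [hv, ← abs_nonpos_iff]
  exact (Finset.single_le_sum (fun k _ => abs_nonneg (α * ⟪u, p k⟫ - ⟪z, p k⟫)) hk).trans hzero

theorem two_mul_inner_le_sum_abs_inner (hE : 1 < finrank ℝ E)
    (hp : ∀ v : E, (∀ i ∈ s, ⟪v, p i⟫ = 0) → v = 0) {y : E}
    (hy : ∀ i ∈ s, p i ≠ 0 → ∀ v, ⟪v, p i⟫ = 0 → 2 * ⟪v, y⟫ ≤ ∑ k ∈ s, |⟪v, p k⟫|) (u : E) :
    2 * ⟪u, y⟫ ≤ ∑ k ∈ s, |⟪u, p k⟫| := by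
  rcases eq_or_ne u 0 with rfl | hu
  · simp
  by_cases hnormal : ∃ k ∈ s, p k ≠ 0 ∧ ⟪u, p k⟫ = 0
  · obtain ⟨k, hk, hpk, huk⟩ := hnormal
    exact hy k hk hpk u huk
  push Not at hnormal
  obtain ⟨i, hi, j, hj, hpi, hpj, v, w, r, hv, hw, hr, hvw, hsum⟩ :=
    exists_normal_add_normal_eq_smul hE hp hu hnormal
  refine le_of_mul_le_mul_left ?_ hr
  calc r * (2 * ⟪u, y⟫) = 2 * ⟪v, y⟫ + 2 * ⟪w, y⟫ := by
        rw [← mul_add, ← inner_add_left, hvw, real_inner_smul_left, mul_left_comm]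
    _ ≤ ∑ k ∈ s, |⟪v, p k⟫| + ∑ k ∈ s, |⟪w, p k⟫| :=
        add_le_add (hy i hi hpi v hv) (hy j hj hpj w hw)
    _ = r * ∑ k ∈ s, |⟪u, p k⟫| := hsum

end Support

section Plane

theorem integral_two_mul_sqrt_sq_sub_sq {R t : ℝ} (hR : 0 < R) (ht : -R ≤ t) (htR : t ≤ R) :
    ∫ x in t..R, 2 * √(R ^ 2 - x ^ 2) = R ^ 2 * Real.arccos (t / R) - t * √(R ^ 2 - t ^ 2) := by
  have hderiv (x : ℝ) (hx : x ∈ Set.Ioo t R) :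
      HasDerivAt (fun x => x * √(R ^ 2 - x ^ 2) - R ^ 2 * Real.arccos (x / R))
        (2 * √(R ^ 2 - x ^ 2)) x := by
    have hpos : 0 < R ^ 2 - x ^ 2 := by nlinarith [hx.1, hx.2]
    have hlt : x / R < 1 := (div_lt_one hR).2 hx.2
    have hgt : -1 < x / R := by
      rw [lt_div_iff₀ hR]
      linarith [hx.1]
    have hsub : HasDerivAt (fun x : ℝ => R ^ 2 - x ^ 2) (-(2 * x)) x := by
      simpa using (hasDerivAt_pow 2 x).const_sub (R ^ 2)
    have harccos := ((Real.hasDerivAt_arccos hgt.ne' hlt.ne).comp x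
      ((hasDerivAt_id x).div_const R)).const_mul (R ^ 2)
    refine (((hasDerivAt_id x).mul (hsub.sqrt hpos.ne')).sub harccos).congr_deriv ?_
    have hsqrt : √(1 - (x / R) ^ 2) = √(R ^ 2 - x ^ 2) / R := by
      have hscale : 1 - (x / R) ^ 2 = (R ^ 2 - x ^ 2) / R ^ 2 := by field_simp
      rw [hscale, Real.sqrt_div hpos.le, Real.sqrt_sq hR.le]
    have hsq := Real.sq_sqrt hpos.le
    simp only [id, hsqrt]
    field_simp
    linear_combination -hsq
  have hcont : Continuous fun x => x * √(R ^ 2 - x ^ 2) - R ^ 2 * Real.arccos (x / R) := by fun_prop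
  rw [intervalIntegral.integral_eq_sub_of_hasDerivAt_of_le htR hcont.continuousOn hderiv
    (Continuous.intervalIntegrable (by fun_prop) _ _), sub_self, Real.sqrt_zero, div_self hR.ne',
    Real.arccos_one]
  ring

variable {ι E : Type*} [NormedAddCommGroup E] [InnerProductSpace ℝ E]

/-- The segment cut off from the open ball of radius `R` about the origin by the hyperplane with
normal `ν` at height `t`. -/
def ballSegment (ν : E) (t R : ℝ) : Set E :=
  ball 0 R ∩ {x | t < ⟪ν, x⟫}

theorem exists_norm_eq_one_forall_orthogonal_eq_smul [FiniteDimensional ℝ E]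
    (hE : finrank ℝ E = 2) (p : E) :
    ∃ ν : E, ‖ν‖ = 1 ∧ (p ≠ 0 → ∀ v, ⟪v, p⟫ = 0 → ∃ t : ℝ, v = t • ν) := by
  obtain ⟨Φ, hΦ⟩ := exists_linearIsometryEquiv_prod_apply_eq (F := ℝ) (by simp [hE]) p
  refine ⟨Φ.symm (WithLp.toLp 2 (0, 1)), by simp, fun hp v hv => ⟨(Φ v).snd, Φ.injective ?_⟩⟩
  have hfst : (Φ v).fst = 0 := by
    rw [← Φ.inner_map_map, hΦ, WithLp.prod_inner_apply] at hv
    simpa [hp] using hv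
  rw [map_smul, Φ.apply_symm_apply]
  exact WithLp.ofLp_injective 2 (Prod.ext (by simp [hfst]) (by simp))

theorem half_sum_add_mem_zonotope [FiniteDimensional ℝ E] (hE : 1 < finrank ℝ E) {s : Finset ι}
    {p : ι → E} {c : E} (hc : closedBall c 1 ⊆ zonotope s p) {y : E}
    (hy : ∀ i ∈ s, p i ≠ 0 → ∀ v, ⟪v, p i⟫ = 0 → ⟪v, y⟫ ≤ ‖v‖) :
    (1 / 2 : ℝ) • ∑ i ∈ s, p i + y ∈ zonotope s p := by
  refine half_sum_add_mem_zonotope_of_two_mul_inner_le (two_mul_inner_le_sum_abs_inner hE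
    (fun v => eq_zero_of_closedBall_subset_zonotope hc) fun i hi hpi v hv => ?_)
  linarith [hy i hi hpi v hv, two_mul_norm_le_sum_abs_inner hc v]

theorem ball_subset_preimage_add_union_ballSegment [FiniteDimensional ℝ E] (hE : 1 < finrank ℝ E)
    {s : Finset ι} {p ν : ι → E} {c : E} (hc : closedBall c 1 ⊆ zonotope s p)
    (hν : ∀ i, ‖ν i‖ = 1) (hνp : ∀ i, p i ≠ 0 → ∀ v, ⟪v, p i⟫ = 0 → ∃ t : ℝ, v = t • ν i) (R : ℝ) :
    ball 0 R ⊆ ((1 / 2 : ℝ) • ∑ i ∈ s, p i + ·) ⁻¹' zonotope s p ∪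
      ⋃ i ∈ s, (ballSegment (ν i) 1 R ∪ ballSegment (-ν i) 1 R) := by
  intro y hyR
  by_cases h : ∃ i ∈ s, y ∈ ballSegment (ν i) 1 R ∪ ballSegment (-ν i) 1 R
  · exact Or.inr (by simpa using h)
  refine Or.inl (half_sum_add_mem_zonotope hE hc fun i hi hpi v hv => ?_)
  obtain ⟨t, rfl⟩ := hνp i hpi v hv
  have hpos : ⟪ν i, y⟫ ≤ 1 := not_lt.1 fun hlt => h ⟨i, hi, Or.inl ⟨hyR, hlt⟩⟩
  have hneg : ⟪-ν i, y⟫ ≤ 1 := not_lt.1 fun hlt => h ⟨i, hi, Or.inr ⟨hyR, hlt⟩⟩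
  rw [inner_neg_left, neg_le] at hneg
  rw [real_inner_smul_left, norm_smul, hν, mul_one, Real.norm_eq_abs]
  refine (le_abs_self _).trans ?_
  rw [abs_mul]
  exact mul_le_of_le_one_right (abs_nonneg _) (abs_le.2 ⟨hneg, hpos⟩)

variable [FiniteDimensional ℝ E] [MeasurableSpace E] [BorelSpace E]

theorem measureReal_ballSegment (hE : finrank ℝ E = 2) {ν : E} (hν : ‖ν‖ = 1) {R t : ℝ}
    (hR : 0 < R) (ht : -R ≤ t) (htR : t ≤ R) :
    volume.real (ballSegment ν t R) =
      R ^ 2 * Real.arccos (t / R) - t * √(R ^ 2 - t ^ 2) := by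
  obtain ⟨Φ, hΦ⟩ := exists_linearIsometryEquiv_prod_apply_eq (F := ℝ) (by simp [hE]) ν
  have hregion : ballSegment ν t R = splitEquiv Φ ⁻¹'
      regionBetween (fun x => -√(R ^ 2 - x ^ 2)) (fun x => √(R ^ 2 - x ^ 2)) (Set.Ioc t R) := by
    ext x
    have hfst : ⟪ν, x⟫ = (Φ x).fst := by
      rw [← Φ.inner_map_map, hΦ, WithLp.prod_inner_apply]
      simp [hν]
    have hnorm : ‖x‖ < R ↔ (Φ x).snd ^ 2 < R ^ 2 - (Φ x).fst ^ 2 := by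
      rw [← sq_lt_sq₀ (norm_nonneg x) hR.le, ← Φ.norm_map x, WithLp.prod_norm_sq_eq_of_L2,
        Real.norm_eq_abs, Real.norm_eq_abs, sq_abs, sq_abs, lt_sub_iff_add_lt']
    have hle (h : (Φ x).snd ^ 2 < R ^ 2 - (Φ x).fst ^ 2) : (Φ x).fst ≤ R :=
      le_of_abs_le (abs_le_of_sq_le_sq (by linarith [sq_nonneg (Φ x).snd]) hR.le)
    simp only [ballSegment, Set.mem_inter_iff, mem_ball_zero_iff, Set.mem_ofPred_eq, hnorm, hfst,
      Set.mem_preimage, regionBetween, splitEquiv_apply, Set.mem_Ioc, Set.mem_Ioo, ← Real.sq_lt]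
    tauto
  rw [measureReal_def, ← volume_image_splitEquiv Φ, hregion,
    Set.image_preimage_eq _ (splitEquiv Φ).surjective, Measure.volume_eq_prod,
    volume_regionBetween_eq_integral (Continuous.integrableOn_Ioc (by fun_prop))
      (Continuous.integrableOn_Ioc (by fun_prop)) measurableSet_Ioc
      fun x _ => neg_le_self (Real.sqrt_nonneg _),
    ← intervalIntegral.integral_of_le htR, ENNReal.toReal_ofReal,
    ← integral_two_mul_sqrt_sq_sub_sq hR ht htR]
  · simp [two_mul]
  · refine intervalIntegral.integral_nonneg htR fun x _ => ?_
    simp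

theorem measureReal_ball_of_finrank_eq_two (hE : finrank ℝ E = 2) (x : E) {r : ℝ} (hr : 0 ≤ r) :
    volume.real (ball x r) = r ^ 2 * π := by
  have : Nontrivial E := nontrivial_of_finrank_pos (R := ℝ) (by omega)
  rw [measureReal_def, InnerProductSpace.volume_ball_of_dim_even (k := 1) hE]
  simp [hE, hr, Real.pi_nonneg]

theorem sq_mul_pi_le_measureReal_zonotope_add (hE : finrank ℝ E = 2) {s : Finset ι} {p : ι → E}
    {c : E} (hc : closedBall c 1 ⊆ zonotope s p) {R : ℝ} (hR : 1 ≤ R) :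
    R ^ 2 * π ≤ volume.real (zonotope s p) +
      s.card * (2 * (R ^ 2 * Real.arccos (1 / R) - √(R ^ 2 - 1))) := by
  choose ν hν hνp using fun i => exists_norm_eq_one_forall_orthogonal_eq_smul hE (p i)
  set m := (1 / 2 : ℝ) • ∑ i ∈ s, p i
  set A := R ^ 2 * Real.arccos (1 / R) - √(R ^ 2 - 1)
  have hsegment {v : E} (hv : ‖v‖ = 1) : volume.real (ballSegment v 1 R) = A := by
    rw [measureReal_ballSegment hE hv (by linarith) (by linarith) hR, one_mul, one_pow]
  have hunion : volume.real (⋃ i ∈ s, (ballSegment (ν i) 1 R ∪ ballSegment (-ν i) 1 R)) ≤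
      s.card * (2 * A) := by
    refine (measureReal_biUnion_finset_le _ _).trans ?_
    rw [← nsmul_eq_mul]
    refine Finset.sum_le_card_nsmul _ _ _ fun i _ => (measureReal_union_le _ _).trans_eq ?_
    rw [hsegment (hν i), hsegment ((norm_neg _).trans (hν i)), two_mul]
  have hpreimage : volume ((m + ·) ⁻¹' zonotope s p) = volume (zonotope s p) :=
    measure_preimage_add _ _ _
  have hfinite : volume (((m + ·) ⁻¹' zonotope s p) ∪
      ⋃ i ∈ s, (ballSegment (ν i) 1 R ∪ ballSegment (-ν i) 1 R)) ≠ ⊤ := by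
    refine measure_union_ne_top (hpreimage ▸ (isCompact_zonotope s p).measure_ne_top)
      (measure_ne_top_of_subset (s := ball 0 R) ?_ measure_ball_lt_top.ne)
    exact Set.iUnion₂_subset fun i _ => Set.union_subset Set.inter_subset_left Set.inter_subset_left
  calc R ^ 2 * π = volume.real (ball (0 : E) R) :=
        (measureReal_ball_of_finrank_eq_two hE 0 (by linarith)).symm
    _ ≤ volume.real ((m + ·) ⁻¹' zonotope s p) +
          volume.real (⋃ i ∈ s, (ballSegment (ν i) 1 R ∪ ballSegment (-ν i) 1 R)) :=
        (measureReal_mono (ball_subset_preimage_add_union_ballSegment (by omega) hc hν hνp R)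
          hfinite).trans (measureReal_union_le _ _)
    _ ≤ volume.real (zonotope s p) + s.card * (2 * A) := by
        rw [measureReal_def, hpreimage, ← measureReal_def]
        gcongr

theorem two_mul_card_mul_tan_le_measureReal_zonotope (hE : finrank ℝ E = 2) {s : Finset ι}
    {p : ι → E} {c : E} (hc : closedBall c 1 ⊆ zonotope s p) :
    2 * s.card * Real.tan (π / (2 * s.card)) ≤ volume.real (zonotope s p) := by
  have hs : (2 : ℝ) ≤ s.card := by
    exact_mod_cast hE ▸ finrank_le_card_of_closedBall_subset_zonotope hc
  set a := π / (2 * s.card) with ha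
  have hcard : 2 * s.card * a = π := by
    rw [ha]
    field_simp
  have ha_pos : 0 < a := by positivity
  have ha_lt : a < π / 2 := by nlinarith [Real.pi_pos]
  have hcos : 0 < Real.cos a := Real.cos_pos_of_mem_Ioo ⟨by linarith, ha_lt⟩
  have hR : 1 ≤ 1 / Real.cos a := one_le_one_div hcos (Real.cos_le_one a)
  have harccos : Real.arccos (1 / (1 / Real.cos a)) = a := by
    rw [one_div_one_div, Real.arccos_cos ha_pos.le (by linarith)]
  have hsqrt : √((1 / Real.cos a) ^ 2 - 1) = Real.tan a := by
    rw [one_div, inv_pow, ← Real.inv_one_add_tan_sq hcos.ne', inv_inv, add_sub_cancel_left,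
      Real.sqrt_sq (Real.tan_pos_of_pos_of_lt_pi_div_two ha_pos ha_lt).le]
  have hdisc := sq_mul_pi_le_measureReal_zonotope_add hE hc hR
  rw [harccos, hsqrt] at hdisc
  linear_combination hdisc + (1 / Real.cos a) ^ 2 * hcard

end Plane

section Tangent

theorem hasDerivAt_tan_sub_add_pow_three_div_three {x : ℝ} (hx : Real.cos x ≠ 0) :
    HasDerivAt (fun x => Real.tan x - (x + x ^ 3 / 3)) (Real.tan x ^ 2 - x ^ 2) x := by
  have hcubic : HasDerivAt (fun x : ℝ => x + x ^ 3 / 3) (1 + x ^ 2) x :=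
    ((hasDerivAt_id x).add ((hasDerivAt_pow 3 x).div_const 3)).congr_deriv (by simp)
  refine ((Real.hasDerivAt_tan hx).sub hcubic).congr_deriv ?_
  rw [one_div, ← Real.inv_one_add_tan_sq hx, inv_inv, add_sub_add_left_eq_sub]

theorem add_pow_three_div_three_le_tan {x : ℝ} (hx₀ : 0 ≤ x) (hx : x < π / 2) :
    x + x ^ 3 / 3 ≤ Real.tan x := by
  have hderiv (y : ℝ) (hy : y ∈ Set.Ico 0 (π / 2)) :
      HasDerivAt (fun y => Real.tan y - (y + y ^ 3 / 3)) (Real.tan y ^ 2 - y ^ 2) y :=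
    hasDerivAt_tan_sub_add_pow_three_div_three
      (Real.cos_pos_of_mem_Ioo ⟨by linarith [hy.1, Real.pi_pos], hy.2⟩).ne'
  have hmono : MonotoneOn (fun y => Real.tan y - (y + y ^ 3 / 3)) (Set.Ico 0 (π / 2)) := by
    refine monotoneOn_of_hasDerivWithinAt_nonneg (convex_Ico _ _)
      (fun y hy => (hderiv y hy).continuousAt.continuousWithinAt)
      (fun y hy => (hderiv y (interior_subset hy)).hasDerivWithinAt) fun y hy => sub_nonneg.2 ?_
    obtain ⟨hy₀, hy⟩ := interior_subset hy
    exact pow_le_pow_left₀ hy₀ (Real.le_tan hy₀ hy) 2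
  simpa using hmono ⟨le_rfl, by positivity⟩ ⟨hx₀, hx⟩ hx₀

theorem one_add_pi_sq_div_le_mul_tan {x : ℝ} (hx : 1 < x) :
    1 + π ^ 2 / (12 * x ^ 2) ≤ 2 * x / π * Real.tan (π / (2 * x)) := by
  have : 0 < x := zero_lt_one.trans hx
  have hlt : π / (2 * x) < π / 2 := div_lt_div_of_pos_left Real.pi_pos two_pos (by linarith)
  calc 1 + π ^ 2 / (12 * x ^ 2) = 2 * x / π * (π / (2 * x) + (π / (2 * x)) ^ 3 / 3) := by
        field_simp
        ring
    _ ≤ 2 * x / π * Real.tan (π / (2 * x)) := by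
        gcongr
        exact add_pow_three_div_three_le_tan (by positivity) hlt

end Tangent

section Main

universe u

variable {ι : Type*} {E : Type u} [NormedAddCommGroup E] [InnerProductSpace ℝ E]
  [FiniteDimensional ℝ E] [MeasurableSpace E] [BorelSpace E] {s : Finset ι} {p : ι → E} {c : E}

theorem measureReal_closedBall_mul_tan_le_of_finrank_eq_two (hE : finrank ℝ E = 2)
    (hc : closedBall c 1 ⊆ zonotope s p) :
    volume.real (closedBall (0 : E) 1) * (2 * s.card / π * Real.tan (π / (2 * s.card))) ≤
      volume.real (zonotope s p) := by
  have hball : volume.real (closedBall (0 : E) 1) = π := by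
    rw [measureReal_def, Measure.addHaar_unitClosedBall_eq_addHaar_unitBall, ← measureReal_def,
      measureReal_ball_of_finrank_eq_two hE 0 zero_le_one, one_pow, one_mul]
  rw [hball, ← mul_assoc, mul_div_cancel₀ _ Real.pi_ne_zero]
  exact two_mul_card_mul_tan_le_measureReal_zonotope hE hc

theorem measureReal_closedBall_mul_tan_le_measureReal_zonotope (hE : 2 ≤ finrank ℝ E)
    (hc : closedBall c 1 ⊆ zonotope s p) :
    volume.real (closedBall (0 : E) 1) * (2 * s.card / π * Real.tan (π / (2 * s.card))) ≤
      volume.real (zonotope s p) := by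
  obtain ⟨d, hd⟩ : ∃ d, finrank ℝ E = d := ⟨_, rfl⟩
  rw [hd] at hE
  induction d, hE using Nat.le_induction generalizing E with
  | base => exact measureReal_closedBall_mul_tan_le_of_finrank_eq_two hd hc
  | succ d _ ih =>
    -- `ULift` keeps the model of the hyperplane in the universe over which the induction ranges.
    have hF : finrank ℝ (EuclideanSpace ℝ (ULift.{u} (Fin d))) = d := by simp
    exact measureReal_closedBall_mul_le_of_finrank_eq_add_one (by rw [hd, hF])
      (fun q b hb => ih hb hF) hc

theorem zonotope_volume_ge_of_inradius_ge_one_general (hE : 2 ≤ finrank ℝ E)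
    (hc : closedBall c 1 ⊆ zonotope s p) :
    volume.real (closedBall (0 : E) 1) * (1 + π ^ 2 / (12 * (s.card : ℝ) ^ 2)) ≤
      volume.real (zonotope s p) := by
  have hs : (1 : ℝ) < s.card := by
    exact_mod_cast hE.trans (finrank_le_card_of_closedBall_subset_zonotope hc)
  calc volume.real (closedBall (0 : E) 1) * (1 + π ^ 2 / (12 * (s.card : ℝ) ^ 2))
      ≤ volume.real (closedBall (0 : E) 1) *
          (2 * s.card / π * Real.tan (π / (2 * s.card))) := by
        gcongr
        exact one_add_pi_sq_div_le_mul_tan hs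
    _ ≤ volume.real (zonotope s p) := measureReal_closedBall_mul_tan_le_measureReal_zonotope hE hc

end Main

/-- Let `2 ≤ d ≤ n` and let `p₁, …, p_n ∈ ℝ^d` generate the zonotope
`Z = ∑ᵢ [0, pᵢ]`. If `Z` contains a translate of the closed Euclidean unit ball (inradius at
least `1`), then `vol_d(Z) ≥ κ_d (1 + π²/(12 n²))`, where `κ_d` is the volume of the unit
ball. -/
theorem zonotope_volume_ge_of_inradius_ge_one (d n : ℕ) (hd : 2 ≤ d) (hdn : d ≤ n)
    (p : Fin n → EuclideanSpace ℝ (Fin d))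
    (hin : ∃ c : EuclideanSpace ℝ (Fin d),
      Metric.closedBall c 1 ⊆ ∑ i : Fin n, segment ℝ (0 : EuclideanSpace ℝ (Fin d)) (p i)) :
    (volume (Metric.closedBall (0 : EuclideanSpace ℝ (Fin d)) 1)).toReal *
        (1 + Real.pi ^ 2 / (12 * (n : ℝ) ^ 2)) ≤
      (volume (∑ i : Fin n, segment ℝ (0 : EuclideanSpace ℝ (Fin d)) (p i))).toReal := by
  obtain ⟨c, hc⟩ := hin
  simpa [measureReal_def, zonotope] using
    zonotope_volume_ge_of_inradius_ge_one_general (s := Finset.univ) (by simpa using hd) hc
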